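/- Let k be a positive integer, 0 ≤ r < k/2, and let B be tridiagonal and skew-symmetric with matrix elements b_{j,k}. Assume (λ_{n+1}/λ_n)_{n≥1} is bounded; b_{n,n−1}/λ_n → 0 and b_{n,n}/λ_n → 0; and the sequences (|b_{n,n+1}|(λ_{n+1}^k/λ_n^k − 1))_{n≥1}, (b_{n,n}/λ_n^r)_{n≥1} and (b_{n,n−1}/λ_n^r)_{n≥1} are bounded. Let n < l be positive integers, t ≥ 0, u : [0,t] → ℝ a piecewise constant control, and let (Υ^u_τ)_{τ∈[0,t]} be a propagator for u, i.e. a family of unitary operators on H with Υ^u_0 = Id such that, for every initial state in D(|A|^{k/2}), the trajectory stays in D(|A|^{k/2}), is absolutely continuous, satisfies dΥ^u_τψ/dτ = (A + u(τ)B)Υ^u_τψ almost everywhere, and obeys ‖Υ^u_τψ‖_{k/2} ≤ e^{c ∫_0^t |u|}‖ψ‖_{k/2} where c is the coupling constant; assume also Galerkin propagators X^u_{(N)} of every order exist. Then |⟨φ_l, Υ^u_t φ_n⟩| ≤ (3^{l−n}/(l−n)!) · (∏_{j=l+1}^{2l−n} L(j)) · (∫_0^t |u(τ)| dτ)^{l−n},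 where L(j) := sup_{p,q ≤ j} |b_{p,q}|. -/

import Mathlib

/- STATEMENT 13 (transition-probability estimate for tridiagonal systems):
`|⟨φ_l, Υ^u_t φ_n⟩| ≤ (3^{l−n}/(l−n)!) ∏_{j=l+1}^{2l−n} L(j) (∫₀ᵗ|u|)^{l−n}`. -/

open Filter Topology MeasureTheory
open scoped ComplexInnerProductSpace

noncomputable section

/-- The domain `D(|A|^s)`. -/
def domAs {H : Type*} [NormedAddCommGroup H] [InnerProductSpace ℂ H]
    (φ : HilbertBasis ℕ ℂ H) (lam : ℕ → ℝ) (s : ℝ) : Set H :=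
  {ψ : H | Summable fun n => lam n ^ (2 * s) * ‖φ.repr ψ n‖ ^ 2}

/-- The `s`-norm. -/
def sNorm {H : Type*} [NormedAddCommGroup H] [InnerProductSpace ℂ H]
    (φ : HilbertBasis ℕ ℂ H) (lam : ℕ → ℝ) (s : ℝ) (ψ : H) : ℝ :=
  Real.sqrt (∑' n, lam n ^ (2 * s) * ‖φ.repr ψ n‖ ^ 2)

/-- The skew-adjoint operator `Aψ = Σ_n (−iλ_n)⟨φ_n,ψ⟩φ_n`. -/
def Aop {H : Type*} [NormedAddCommGroup H] [InnerProductSpace ℂ H] [CompleteSpace H]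
    (φ : HilbertBasis ℕ ℂ H) (lam : ℕ → ℝ) (ψ : H) : H :=
  ∑' n, (-(Complex.I * (lam n : ℂ))) • (φ.repr ψ n • φ n)

/-- The tridiagonal operator `Bψ = Σ_n (b_{n,n−1}x_{n−1} + b_{n,n}x_n + b_{n,n+1}x_{n+1})φ_n`. -/
def BopTri {H : Type*} [NormedAddCommGroup H] [InnerProductSpace ℂ H] [CompleteSpace H]
    (φ : HilbertBasis ℕ ℂ H) (b : ℕ → ℕ → ℂ) (ψ : H) : H :=
  ∑' n, ((if n = 0 then 0 else b n (n - 1) * φ.repr ψ (n - 1)) +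
      b n n * φ.repr ψ n + b n (n + 1) * φ.repr ψ (n + 1)) • φ n

/-- The orthogonal projection `π_N` onto `L_N = span{φ_0,…,φ_N}`. -/
def projN {H : Type*} [NormedAddCommGroup H] [InnerProductSpace ℂ H] [CompleteSpace H]
    (φ : HilbertBasis ℕ ℂ H) (N : ℕ) (ψ : H) : H :=
  ∑' n, if n ≤ N then φ.repr ψ n • φ n else 0

/-- The space `L_N = span{φ_0,…,φ_N}`. -/
def galerkinSpace {H : Type*} [NormedAddCommGroup H] [InnerProductSpace ℂ H]
    (φ : HilbertBasis ℕ ℂ H) (N : ℕ) : Set H :=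
  {x : H | ∀ n, N < n → φ.repr x n = 0}

/-- `u` is piecewise constant on `[0,T]`. -/
def PiecewiseConstant (u : ℝ → ℝ) (T : ℝ) : Prop :=
  ∃ (m : ℕ) (pts : Fin (m + 1) → ℝ) (vals : Fin m → ℝ),
    pts 0 = 0 ∧ pts (Fin.last m) = T ∧ Monotone pts ∧
      ∀ i : Fin m, ∀ t ∈ Set.Ico (pts i.castSucc) (pts i.succ), u t = vals i

/-!
Write `x_p(τ) = ⟨φ_p, Υ_τ φ_n⟩`. The coordinates solve `x_p' = -iλ_p x_p + u (Bψ)_p` almost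
everywhere. Since `-iλ_p` is purely imaginary it does not contribute to the derivative of `|x_p|`,
so `|x_p|' ≤ |u| |(Bψ)_p| ≤ 3 |u| L(q + 1) max_{|p' - p| ≤ 1} |x_{p'}|` whenever `p ≤ q`
(`deriv_norm_le`, `inner_repr_Aop`, `norm_repr_BopTri_le`). All moduli are at most `1`, and
`x_p(0) = 0` for `p ≠ n`. With `V(τ) = ∫₀^τ |u|`, induction on `d` gives, for `n + d ≤ p ≤ q`,
`|x_p(τ)| ≤ 3^d / d! · L(q + 1) ⋯ L(q + d) · V(τ)^d` (`coordinate_bound`): the neighbours of `p`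
have index at least `n + (d - 1)` and at most `q + 1`, and integrating `|u| V^(d-1)` gives
`V^d / d` (`norm_primitive_le`). The case `d = l - n`, `p = q = l` is the claim.

The estimate is thus obtained on the infinite-dimensional trajectory itself, without
finite-dimensional approximation. The coordinate equation must be read with care when
`k = 1`, since a trajectory in `D(|A|^{1/2})` may leave `D(A)` and the series defining `Aop` then
takes the junk value `0`. This does no harm: each of `Aψ`, `Bψ` has either the expected coordinates
or all coordinates zero (`repr_tsum_smul`), and both cases obey the inequality above. Measurability
in time is only needed through absolute continuity of `|x_p|`, which follows from integrability of
the right-hand side; if the latter is not integrable, its integral is `0` by convention and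
`Υ_t φ_n = φ_n`.
-/

/-! ### Absolutely continuous functions -/

/-- An absolutely continuous real function whose derivative is almost everywhere nonpositive
does not increase from the left end of the interval to the right end. -/
lemma le_of_ac_of_deriv_nonpos {f : ℝ → ℝ} {a b : ℝ} (hab : a ≤ b)
    (hf : AbsolutelyContinuousOnInterval f a b)
    (hd : ∀ᵐ x, x ∈ Set.Icc a b → deriv f x ≤ 0) : f b ≤ f a := by
  have h1 := hf.integral_deriv_eq_sub
  have h2 : ∫ x in a..b, deriv f x ≤ 0 := by
    have h3 : 0 ≤ ∫ x in a..b, -deriv f x := by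
      apply intervalIntegral.integral_nonneg_of_ae_restrict hab
      rw [Filter.EventuallyLE, ae_restrict_iff' measurableSet_Icc]
      filter_upwards [hd] with x hx hxm
      simpa using hx hxm
    rw [intervalIntegral.integral_neg] at h3
    linarith
  linarith

/-- The modulus of a primitive of an integrable complex function is absolutely continuous, since
its increments are dominated by those of the primitive of `‖f‖`. -/
lemma ac_norm_primitive {f : ℝ → ℂ} {T : ℝ}
    (hf : IntervalIntegrable f volume 0 T) :
    AbsolutelyContinuousOnInterval (fun s => ‖∫ σ in (0 : ℝ)..s, f σ‖) 0 T := by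
  have hG := hf.norm.absolutelyContinuousOnInterval_intervalIntegral (c := 0) (by simp)
  have hint : ∀ s ∈ Set.uIcc 0 T, IntervalIntegrable f volume 0 s := fun s hs =>
    hf.mono_set (Set.uIcc_subset_uIcc_left hs)
  have key : ∀ a ∈ Set.uIcc 0 T, ∀ c ∈ Set.uIcc 0 T,
      dist ‖∫ σ in (0 : ℝ)..a, f σ‖ ‖∫ σ in (0 : ℝ)..c, f σ‖ ≤
        dist (∫ σ in (0 : ℝ)..a, ‖f σ‖) (∫ σ in (0 : ℝ)..c, ‖f σ‖) := by
    intro a ha c hc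
    rw [Real.dist_eq, Real.dist_eq]
    refine (abs_norm_sub_norm_le _ _).trans ?_
    rw [intervalIntegral.integral_interval_sub_left (hint a ha) (hint c hc),
      intervalIntegral.integral_interval_sub_left (hint a ha).norm (hint c hc).norm]
    exact intervalIntegral.norm_integral_le_abs_integral_norm
  rw [absolutelyContinuousOnInterval_iff] at hG ⊢
  intro ε hε
  obtain ⟨δ, hδ, h⟩ := hG ε hε
  refine ⟨δ, hδ, fun E hE hEδ => lt_of_le_of_lt ?_ (h E hE hEδ)⟩
  refine Finset.sum_le_sum fun i hi => ?_
  have := hE.1 i hi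
  exact key _ this.1 _ this.2

/-- At a point where both are differentiable, the modulus of `y` grows at rate
`Re (conj y · y') / |y|`; at a zero of `y` the modulus has a minimum, so its derivative vanishes.
Hence only the component of `y'` along `y` matters. -/
lemma deriv_norm_le {y : ℝ → ℂ} {y' : ℂ} {x g : ℝ} (hy : HasDerivAt y y' x)
    (hd : DifferentiableAt ℝ (fun s => ‖y s‖) x) (hg : 0 ≤ g)
    (h : inner ℝ (y x) y' ≤ ‖y x‖ * g) : deriv (fun s => ‖y s‖) x ≤ g := by
  by_cases h0 : y x = 0
  · have hmin : IsLocalMin (fun s => ‖y s‖) x :=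
      Filter.Eventually.of_forall fun s => by simp [h0]
    rw [hmin.deriv_eq_zero]
    exact hg
  · have h1 := hy.norm_sq
    have h2 := hd.hasDerivAt.fun_pow 2
    have h3 := h1.unique h2
    have hpos : 0 < ‖y x‖ := norm_pos_iff.mpr h0
    simp only [Nat.cast_ofNat, Nat.add_one_sub_one, pow_one] at h3
    have : ‖y x‖ * deriv (fun s => ‖y s‖) x ≤ ‖y x‖ * g := by linarith
    exact le_of_mul_le_mul_left this hpos

/-- One iteration step: if the component of `y' = f` along `y` is at most
`K (d + 1) |u| V^d` with `V` the primitive of `|u|`, then `|y| ≤ K V^(d+1)`. -/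
lemma norm_primitive_le {f : ℝ → ℂ} {u : ℝ → ℝ} {T : ℝ} (hT : 0 ≤ T)
    (hf : IntervalIntegrable f volume 0 T) (hu : IntervalIntegrable u volume 0 T)
    {K : ℝ} (hK : 0 ≤ K) (d : ℕ)
    (h : ∀ σ ∈ Set.Icc 0 T, inner ℝ (∫ ρ in (0 : ℝ)..σ, f ρ) (f σ) ≤
      ‖∫ ρ in (0 : ℝ)..σ, f ρ‖ * (K * ((d + 1) * (∫ ρ in (0 : ℝ)..σ, |u ρ|) ^ d * |u σ|))) :
    ‖∫ ρ in (0 : ℝ)..T, f ρ‖ ≤ K * (∫ ρ in (0 : ℝ)..T, |u ρ|) ^ (d + 1) := by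
  have hN := ac_norm_primitive hf
  have hV := hu.abs.absolutelyContinuousOnInterval_intervalIntegral (c := 0) (by simp)
  have hVp : ∀ m : ℕ, AbsolutelyContinuousOnInterval
      (fun s => (∫ ρ in (0 : ℝ)..s, |u ρ|) ^ (m + 1)) 0 T := by
    intro m
    induction m with
    | zero => simpa using hV
    | succ m ih => simpa [pow_succ] using ih.fun_mul hV
  have hD := hN.sub ((hVp d).const_mul K)
  have := le_of_ac_of_deriv_nonpos hT hD (by
    filter_upwards [hN.ae_differentiableAt, hf.ae_hasDerivAt_integral,
      hu.abs.ae_hasDerivAt_integral] with x h1 h2 h3 hx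
    have hx' : x ∈ Set.uIcc 0 T := by rwa [Set.uIcc_of_le hT]
    have h1 := h1 hx'
    have h2 := h2 hx' 0 (by simp)
    have h3 := h3 hx' 0 (by simp)
    have hVnn : 0 ≤ ∫ ρ in (0 : ℝ)..x, |u ρ| :=
      intervalIntegral.integral_nonneg hx.1 fun _ _ => abs_nonneg _
    have h4 := deriv_norm_le h2 h1 (by positivity) (h x hx)
    have h5 := (h3.fun_pow (d + 1)).const_mul K
    have h6 := h1.hasDerivAt.sub h5
    rw [h6.deriv]
    have e : d + 1 - 1 = d := rfl
    rw [e]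
    push_cast
    linarith)
  simp only [Pi.sub_apply, intervalIntegral.integral_same, norm_zero] at this
  simp only [ne_eq, Nat.add_eq_zero_iff, one_ne_zero, and_false, not_false_eq_true, zero_pow,
    mul_zero] at this
  linarith

/-- Only the open pieces matter: the values of `u` at `T` and outside `[0, T]` are irrelevant. -/
lemma PiecewiseConstant.intervalIntegrable {u : ℝ → ℝ} {T : ℝ} (hu : PiecewiseConstant u T) :
    IntervalIntegrable u volume 0 T := by
  obtain ⟨m, pts, vals, h0, hT, hmono, hval⟩ := hu
  have key := IntervalIntegrable.trans_iterate (f := u) (μ := volume)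
    (a := fun i => pts ⟨min i m, by omega⟩) (n := m) (by
      intro i hi
      have e1 : (⟨min i m, by omega⟩ : Fin (m + 1)) = (⟨i, hi⟩ : Fin m).castSucc := by
        ext; simp; omega
      have e2 : (⟨min (i + 1) m, by omega⟩ : Fin (m + 1)) = (⟨i, hi⟩ : Fin m).succ := by
        ext; simp; omega
      simp only [e1, e2]
      refine (intervalIntegrable_const (c := vals ⟨i, hi⟩)).congr_uIoo ?_
      intro s hs
      rw [Set.uIoo_of_le (hmono (Fin.castSucc_lt_succ).le)] at hs
      exact (hval ⟨i, hi⟩ s ⟨hs.1.le, hs.2⟩).symm)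
  have e1 : (⟨min 0 m, by omega⟩ : Fin (m + 1)) = 0 := by ext; simp
  have e2 : (⟨min m m, by omega⟩ : Fin (m + 1)) = Fin.last m := by ext; simp
  simpa only [e1, e2, h0, hT] using key

/-! ### Coordinates in the Hilbert basis -/

section Coordinates

variable {H : Type*} [NormedAddCommGroup H] [InnerProductSpace ℂ H]

lemma repr_basis (φ : HilbertBasis ℕ ℂ H) (n p : ℕ) :
    φ.repr (φ n) p = if p = n then 1 else 0 := by
  rw [φ.repr_apply_apply]
  exact orthonormal_iff_ite.mp φ.orthonormal p n

lemma norm_repr_le (φ : HilbertBasis ℕ ℂ H) (ψ : H) (p : ℕ) : ‖φ.repr ψ p‖ ≤ ‖ψ‖ := by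
  rw [φ.repr_apply_apply]
  exact (norm_inner_le_norm _ _).trans (by simp [φ.orthonormal.1 p])

/-- The coordinates of a formal series are its coefficients, or all vanish when the series
diverges and the junk value `0` is taken. -/
lemma repr_tsum_smul (φ : HilbertBasis ℕ ℂ H) (a : ℕ → ℂ) (p : ℕ) :
    φ.repr (∑' n, a n • φ n) p = a p ∨ φ.repr (∑' n, a n • φ n) p = 0 := by
  by_cases hs : Summable fun n => a n • φ n
  · left
    rw [φ.repr_apply_apply]
    have h1 := (innerSL ℂ (φ p)).hasSum hs.hasSum
    have e : (fun m => innerSL ℂ (φ p) (a m • φ m)) = fun m => if m = p then a p else 0 := by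
      funext m
      have h3 := orthonormal_iff_ite.mp φ.orthonormal p m
      rw [innerSL_apply_apply, inner_smul_right, h3]
      by_cases h : p = m
      · simp [h]
      · simp [h, Ne.symm h]
    rw [e] at h1
    exact h1.unique (hasSum_ite_eq p (a p))
  · right
    rw [tsum_eq_zero_of_not_summable hs]
    simp

lemma basis_mem_domAs (φ : HilbertBasis ℕ ℂ H) (lam : ℕ → ℝ) (s : ℝ) (n : ℕ) :
    φ n ∈ domAs φ lam s := by
  refine summable_of_ne_finset_zero (s := {n}) fun m hm => ?_
  have : m ≠ n := by simpa using hm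
  simp [repr_basis, this]

variable [CompleteSpace H]

/-- `Aψ` is coordinatewise orthogonal (as a real vector) to `ψ`, because `-iλ_p` is purely
imaginary. This also covers `ψ ∉ D(A)`, where `Aop` takes the junk value `0`. -/
lemma inner_repr_Aop (φ : HilbertBasis ℕ ℂ H) (lam : ℕ → ℝ) (ψ : H) (p : ℕ) :
    inner ℝ (φ.repr ψ p) (φ.repr (Aop φ lam ψ) p) = 0 := by
  have h := repr_tsum_smul φ (fun n => -(Complex.I * (lam n : ℂ)) * φ.repr ψ n) p
  simp only [mul_smul] at h
  unfold Aop
  rcases h with h | h <;> rw [h]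
  · rw [Complex.inner]
    simp
    ring
  · simp

lemma norm_repr_BopTri_le (φ : HilbertBasis ℕ ℂ H) (b : ℕ → ℕ → ℂ) (ψ : H) {p : ℕ} (hp : p ≠ 0)
    {C M : ℝ} (hC : 0 ≤ C) (hM : 0 ≤ M)
    (hb : ∀ q, q ≤ p + 1 → ‖b p q‖ ≤ C)
    (hx : ∀ q, p - 1 ≤ q → q ≤ p + 1 → ‖φ.repr ψ q‖ ≤ M) :
    ‖φ.repr (BopTri φ b ψ) p‖ ≤ 3 * C * M := by
  have h := repr_tsum_smul φ (fun n => (if n = 0 then 0 else b n (n - 1) * φ.repr ψ (n - 1)) +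
      b n n * φ.repr ψ n + b n (n + 1) * φ.repr ψ (n + 1)) p
  have hm : ∀ q, p - 1 ≤ q → q ≤ p + 1 → ‖b p q * φ.repr ψ q‖ ≤ C * M := fun q h1 h2 => by
    rw [norm_mul]
    exact mul_le_mul (hb q h2) (hx q h1 h2) (norm_nonneg _) hC
  unfold BopTri
  rcases h with h | h <;> rw [h]
  · rw [if_neg hp]
    refine norm_add₃_le.trans ?_
    have := hm (p - 1) le_rfl (by omega)
    have := hm p (by omega) (by omega)
    have := hm (p + 1) (by omega) (by omega)
    linarith
  · simp only [norm_zero]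
    positivity

/-- The iterated estimate. After `d` iterations of Duhamel's formula only coordinates of index at
least `n` and at most `q + d` are involved; the auxiliary `q ≥ p` makes the bound uniform over the
coordinates reached along the way. -/
lemma coordinate_bound (φ : HilbertBasis ℕ ℂ H) (lam : ℕ → ℝ) (b : ℕ → ℕ → ℂ)
    {t : ℝ} {u : ℝ → ℝ} (hu : IntervalIntegrable u volume 0 t)
    {L : ℕ → ℝ} (hL : ∀ j p q : ℕ, p ≤ j → q ≤ j → ‖b p q‖ ≤ L j)
    {n : ℕ} {Ψ : ℝ → H} (hnorm : ∀ τ, ‖Ψ τ‖ = 1)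
    (hF : IntervalIntegrable (fun σ => Aop φ lam (Ψ σ) + u σ • BopTri φ b (Ψ σ)) volume 0 t)
    (hΨ : ∀ τ ∈ Set.Icc 0 t, Ψ τ = φ n +
      ∫ σ in (0 : ℝ)..τ, (Aop φ lam (Ψ σ) + u σ • BopTri φ b (Ψ σ)))
    (d : ℕ) : ∀ p q : ℕ, n + d ≤ p → p ≤ q → ∀ τ ∈ Set.Icc 0 t,
      ‖φ.repr (Ψ τ) p‖ ≤ (3 : ℝ) ^ d / d.factorial * (∏ i ∈ Finset.range d, L (q + 1 + i)) *
        (∫ σ in (0 : ℝ)..τ, |u σ|) ^ d := by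
  have hLnn : ∀ j, 0 ≤ L j := fun j => (norm_nonneg _).trans (hL j 0 0 (by simp) (by simp))
  induction d with
  | zero =>
    intro p q _ _ τ _
    simpa [hnorm] using norm_repr_le φ (Ψ τ) p
  | succ d ih =>
    intro p q hp hpq τ hτ
    set F : ℝ → H := fun σ => Aop φ lam (Ψ σ) + u σ • BopTri φ b (Ψ σ) with hFdef
    set f : ℝ → ℂ := fun σ => φ.repr (F σ) p with hf
    have hsub : Set.uIcc 0 τ ⊆ Set.uIcc 0 t := by
      rw [Set.uIcc_of_le hτ.1, Set.uIcc_of_le (hτ.1.trans hτ.2)]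
      exact Set.Icc_subset_Icc_right hτ.2
    have hFint : ∀ σ ∈ Set.Icc 0 τ, IntervalIntegrable F volume 0 σ := fun σ hσ =>
      hF.mono_set ((Set.uIcc_subset_uIcc_left (by rwa [Set.uIcc_of_le hτ.1])).trans hsub)
    have hfeq : f = fun σ => innerSL ℂ (φ p) (F σ) := by
      funext σ
      simp [hf, φ.repr_apply_apply]
    have hfint : IntervalIntegrable f volume 0 τ := by
      have h1 := hFint τ ⟨hτ.1, le_rfl⟩
      rw [hfeq]
      exact ⟨(innerSL ℂ (φ p)).integrable_comp h1.1, (innerSL ℂ (φ p)).integrable_comp h1.2⟩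
    have hx : ∀ σ ∈ Set.Icc 0 τ, ∫ ρ in (0 : ℝ)..σ, f ρ = φ.repr (Ψ σ) p := by
      intro σ hσ
      rw [hfeq, (innerSL ℂ (φ p)).intervalIntegral_comp_comm (hFint σ hσ),
        hΨ σ ⟨hσ.1, hσ.2.trans hτ.2⟩]
      have hpn : p ≠ n := by omega
      have h0 : (⟪φ p, φ n⟫ : ℂ) = 0 := φ.orthonormal.2 hpn
      rw [φ.repr_apply_apply, inner_add_right, h0, zero_add, innerSL_apply_apply]
    rw [← hx τ ⟨hτ.1, le_rfl⟩]
    have hprod : 0 ≤ ∏ i ∈ Finset.range (d + 1), L (q + 1 + i) :=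
      Finset.prod_nonneg fun i _ => hLnn _
    refine norm_primitive_le hτ.1 hfint (hu.mono_set hsub) (by positivity) d fun σ hσ => ?_
    rw [hx σ hσ]
    have hσt : σ ∈ Set.Icc 0 t := ⟨hσ.1, hσ.2.trans hτ.2⟩
    have hVnn : 0 ≤ ∫ ρ in (0 : ℝ)..σ, |u ρ| :=
      intervalIntegral.integral_nonneg hσ.1 fun _ _ => abs_nonneg _
    have hprod' : 0 ≤ ∏ i ∈ Finset.range d, L (q + 1 + 1 + i) :=
      Finset.prod_nonneg fun i _ => hLnn _
    have hB := norm_repr_BopTri_le φ b (Ψ σ) (p := p) (by omega) (hLnn (q + 1))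
      (M := (3 : ℝ) ^ d / d.factorial * (∏ i ∈ Finset.range d, L (q + 1 + 1 + i)) *
        (∫ ρ in (0 : ℝ)..σ, |u ρ|) ^ d) (by positivity)
      (fun q' hq' => hL _ _ _ (by omega) (by omega))
      (fun q' h1 h2 => ih q' (q + 1) (by omega) (by omega) σ hσt)
    have hfσ : f σ = φ.repr (Aop φ lam (Ψ σ)) p + u σ • φ.repr (BopTri φ b (Ψ σ)) p := by
      simp only [hf, hFdef, φ.repr_apply_apply, inner_add_right, inner_smul_right_eq_smul]
    rw [hfσ, inner_add_right, inner_repr_Aop, zero_add]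
    refine (real_inner_le_norm _ _).trans (mul_le_mul_of_nonneg_left ?_ (norm_nonneg _))
    rw [norm_smul, Real.norm_eq_abs]
    refine (mul_le_mul_of_nonneg_left hB (abs_nonneg _)).trans (le_of_eq ?_)
    have e1 : ∏ i ∈ Finset.range (d + 1), L (q + 1 + i) =
        (∏ i ∈ Finset.range d, L (q + 1 + 1 + i)) * L (q + 1) := by
      rw [Finset.prod_range_succ']
      congr 1
      exact Finset.prod_congr rfl fun i _ => by congr 1; ring
    rw [e1, Nat.factorial_succ]
    have : (d.factorial : ℝ) ≠ 0 := by positivity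
    push_cast
    field_simp
    ring

end Coordinates

theorem stmt13 {H : Type*} [NormedAddCommGroup H] [InnerProductSpace ℂ H] [CompleteSpace H]
    (φ : HilbertBasis ℕ ℂ H) (lam : ℕ → ℝ)
    (hpos : ∀ n, 0 < lam n) (hmono : Monotone lam) (htop : Tendsto lam atTop atTop)
    (b : ℕ → ℕ → ℂ)
    (htri : ∀ j m : ℕ, max j m > min j m + 1 → b j m = 0)
    (hskew : ∀ j m : ℕ, b m j = -(starRingEnd ℂ) (b j m))
    (hratio : ∃ M : ℝ, ∀ n, lam (n + 1) / lam n ≤ M)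
    (hsubz : Tendsto (fun n => ‖b (n + 1) n‖ / lam (n + 1)) atTop (𝓝 0))
    (hdiagz : Tendsto (fun n => ‖b n n‖ / lam n) atTop (𝓝 0))
    (k : ℕ) (hk : 0 < k) (r : ℝ) (hr : 0 ≤ r) (hrk : r < (k : ℝ) / 2)
    (hbd1 : ∃ M₁ : ℝ, ∀ n, ‖b n (n + 1)‖ * (lam (n + 1) ^ k / lam n ^ k - 1) ≤ M₁)
    (hbd2 : ∃ M₂ : ℝ, ∀ n, ‖b n n‖ / lam n ^ r ≤ M₂)
    (hbd3 : ∃ M₃ : ℝ, ∀ n, ‖b (n + 1) n‖ / lam (n + 1) ^ r ≤ M₃)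
    (t : ℝ) (ht : 0 ≤ t)
    (u : ℝ → ℝ) (hu : PiecewiseConstant u t)
    (c : ℝ) (hc : 0 ≤ c)
    -- the propagator: unitary operators with Υ₀ = Id whose trajectories from
    -- `D(|A|^{k/2})` stay there, solve the equation (integrated form) and obey the
    -- energy estimate with coupling constant `c`
    (Υ : ℝ → (H ≃ₗᵢ[ℂ] H)) (hΥ0 : Υ 0 = LinearIsometryEquiv.refl ℂ H)
    (htraj : ∀ ψ ∈ domAs φ lam ((k : ℝ) / 2), ∀ τ ∈ Set.Icc (0 : ℝ) t,
      Υ τ ψ ∈ domAs φ lam ((k : ℝ) / 2) ∧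
        Υ τ ψ = ψ + ∫ σ in (0 : ℝ)..τ, (Aop φ lam (Υ σ ψ) + u σ • BopTri φ b (Υ σ ψ)) ∧
        sNorm φ lam ((k : ℝ) / 2) (Υ τ ψ) ≤
          Real.exp (c * ∫ σ in (0 : ℝ)..t, |u σ|) * sNorm φ lam ((k : ℝ) / 2) ψ)
    -- Galerkin propagators of every order exist
    (X : ℕ → ℝ → ℝ → H → H)
    (hXlin : ∀ N τ σ, IsLinearMap ℂ (X N τ σ))
    (hXmem : ∀ N τ σ, ∀ x ∈ galerkinSpace φ N, X N τ σ x ∈ galerkinSpace φ N)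
    (hXnorm : ∀ N τ σ, ∀ x ∈ galerkinSpace φ N, ‖X N τ σ x‖ = ‖x‖)
    (hXid : ∀ N τ, ∀ x ∈ galerkinSpace φ N, X N τ τ x = x)
    (hXcomp : ∀ N τ σ ρ, ∀ x ∈ galerkinSpace φ N, X N τ σ (X N σ ρ x) = X N τ ρ x)
    (hXde : ∀ N, ∀ σ ∈ Set.Icc (0 : ℝ) t, ∀ x ∈ galerkinSpace φ N, ∀ τ ∈ Set.Icc (0 : ℝ) t,
      X N τ σ x = x + ∫ ρ in σ..τ,
        (projN φ N (Aop φ lam (projN φ N (X N ρ σ x))) +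
          u ρ • projN φ N (BopTri φ b (projN φ N (X N ρ σ x)))))
    -- L j dominates the moduli of all matrix elements with indices ≤ j
    (L : ℕ → ℝ) (hL : ∀ j p q : ℕ, p ≤ j → q ≤ j → ‖b p q‖ ≤ L j)
    (n l : ℕ) (hn : 1 ≤ n) (hnl : n < l) :
    ‖(⟪φ l, Υ t (φ n)⟫ : ℂ)‖ ≤
      (3 : ℝ) ^ (l - n) / (Nat.factorial (l - n)) *
        (∏ j ∈ Finset.Icc (l + 1) (2 * l - n), L j) *
          (∫ τ in (0 : ℝ)..t, |u τ|) ^ (l - n) := by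
  have hLnn : ∀ j, 0 ≤ L j := fun j => (norm_nonneg _).trans (hL j 0 0 (by simp) (by simp))
  have hφ := basis_mem_domAs φ lam ((k : ℝ) / 2) n
  have hln : l ≠ n := by omega
  rw [← φ.repr_apply_apply]
  by_cases hF : IntervalIntegrable
      (fun σ => Aop φ lam (Υ σ (φ n)) + u σ • BopTri φ b (Υ σ (φ n))) volume 0 t
  · have h := coordinate_bound φ lam b hu.intervalIntegrable hL (n := n) (Ψ := fun σ => Υ σ (φ n))
      (fun τ => by simp [φ.orthonormal.1 n]) hF (fun τ hτ => (htraj (φ n) hφ τ hτ).2.1)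
      (l - n) l l (by omega) le_rfl t ⟨ht, le_rfl⟩
    have e : ∏ j ∈ Finset.Icc (l + 1) (2 * l - n), L j =
        ∏ i ∈ Finset.range (l - n), L (l + 1 + i) := by
      have e0 : Finset.Icc (l + 1) (2 * l - n) = Finset.Ico (l + 1) (2 * l - n + 1) := by
        ext i
        simp only [Finset.mem_Icc, Finset.mem_Ico]
        omega
      rw [e0, Finset.prod_Ico_eq_prod_range]
      congr 2
      omega
    rw [e]
    exact h
  · -- a nonintegrable right-hand side has integral `0` by convention, so the state is `φ n`
    have h := (htraj (φ n) hφ t ⟨ht, le_rfl⟩).2.1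
    rw [intervalIntegral.integral_undef hF, add_zero] at h
    rw [h, repr_basis, if_neg hln, norm_zero]
    have h1 : 0 ≤ ∏ j ∈ Finset.Icc (l + 1) (2 * l - n), L j :=
      Finset.prod_nonneg fun i _ => hLnn _
    have h2 : 0 ≤ ∫ τ in (0 : ℝ)..t, |u τ| :=
      intervalIntegral.integral_nonneg ht fun _ _ => abs_nonneg _
    positivity
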